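/- (Theorem 3: Generalization vs. stability.) Let G be a symmetric real-valued structured classification learning algorithm with a point-wise loss ℓ_τ based on a τ-smooth cost and satisfying 0 ≤ ℓ_τ(G_S, z, k) ≤ γ for all k, and suppose G has function stability Δ̄ with respect to removal of a sample. Then for any δ ∈ (0,1), with probability at least 1 − δ over the i.i.d. draw of the training set S of size m from D, the generalization risk is bounded by: R(G_S) ≤ R_e(G_S) + 2τΔ̄ + ((4m−2)τΔ̄ + γ)·√(ln(1/δ)/(2m)). -/

import Mathlib

/-!
The gap `R(G_S) - R_e(G_S)`, as a function of the training set, changes by at most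
`((4m - 2)τΔ + γ) / m` when one sample is replaced: removing the old sample and adding the new one
moves every prediction by at most `2Δ`, hence every loss by at most `2τΔ`, except that the loss at
the replaced sample may move by `γ`. McDiarmid's inequality therefore concentrates the gap around
its mean. The mean is at most `2τΔ`: exchanging `S i` for an independent sample `z` turns the
loss of `G_S` at `S i` into the loss at `z` of the algorithm trained with `z` in place of `S i`.

McDiarmid's inequality is obtained by averaging out one coordinate at a time: by Hoeffding's lemma,
averaging coordinate `i` costs a factor `exp (c i ^ 2 * t ^ 2 / 8)` in the moment generating
function, and it leaves a function which no longer depends on that coordinate.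
-/

open MeasureTheory
open scoped BigOperators

/-- The sample-wise loss `L(gS, z) = ∑_{k} c(gS(x,k), y_(k))` of a prediction
function `gS` on a sample `z = (x, y)` of structure complexity `n`. -/
noncomputable def sampleLoss {X : Type*} {n : ℕ} (c : ℝ → ℝ → ℝ)
    (gS : X → Fin n → ℝ) (z : X × (Fin n → ℝ)) : ℝ :=
  ∑ k, c (gS z.1 k) (z.2 k)

/-- The generalization risk `R(gS) = E_{z∼D}[(1/n) L(gS, z)]`. -/
noncomputable def genRisk {X : Type*} [MeasurableSpace X] {n : ℕ}
    (D : Measure (X × (Fin n → ℝ))) (c : ℝ → ℝ → ℝ)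
    (gS : X → Fin n → ℝ) : ℝ :=
  ∫ z, (1 / (n : ℝ)) * sampleLoss c gS z ∂D

/-- The empirical risk `R_e(gS) = (1/(m n)) ∑_{i=1}^m L(gS, z_i)` of a
prediction function `gS` on a training set `S` of size `m`. -/
noncomputable def empRisk {X : Type*} {n m : ℕ} (c : ℝ → ℝ → ℝ)
    (gS : X → Fin n → ℝ) (S : Fin m → X × (Fin n → ℝ)) : ℝ :=
  (1 / ((m : ℝ) * n)) * ∑ i, sampleLoss c gS (S i)

open ProbabilityTheory Function

section BoundedDifferences

variable {ι : Type*} [DecidableEq ι] {Ω : ι → Type*} {f g : (∀ i, Ω i) → ℝ} {c d : ι → ℝ}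

/-- The hypothesis of McDiarmid's inequality: changing the `i`-th argument of `f` changes its value
by at most `c i`. -/
def HasBoundedDifferences (f : (∀ i, Ω i) → ℝ) (c : ι → ℝ) : Prop :=
  ∀ x i y, |f x - f (update x i y)| ≤ c i

namespace HasBoundedDifferences

protected lemma nonneg [Nonempty (∀ i, Ω i)] (hf : HasBoundedDifferences f c) (i : ι) : 0 ≤ c i :=
  (abs_nonneg _).trans (hf (Classical.arbitrary _) i (Classical.arbitrary (∀ i, Ω i) i))

protected lemma sub (hf : HasBoundedDifferences f c) (hg : HasBoundedDifferences g d) :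
    HasBoundedDifferences (fun x ↦ f x - g x) (fun i ↦ c i + d i) := fun x i y ↦ by
  rw [sub_sub_sub_comm]
  exact (abs_sub _ _).trans (add_le_add (hf x i y) (hg x i y))

protected lemma const_mul {r : ℝ} (hr : 0 ≤ r) (hf : HasBoundedDifferences f c) :
    HasBoundedDifferences (fun x ↦ r * f x) (fun i ↦ r * c i) := fun x i y ↦ by
  rw [← mul_sub, abs_mul, abs_of_nonneg hr]
  exact mul_le_mul_of_nonneg_left (hf x i y) hr

protected lemma sum {κ : Type*} (s : Finset κ) {f : κ → (∀ i, Ω i) → ℝ} {c : κ → ι → ℝ}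
    (hf : ∀ k ∈ s, HasBoundedDifferences (f k) (c k)) :
    HasBoundedDifferences (fun x ↦ ∑ k ∈ s, f k x) (fun i ↦ ∑ k ∈ s, c k i) := fun x i y ↦ by
  rw [← Finset.sum_sub_distrib]
  exact (Finset.abs_sum_le_sum_abs _ _).trans (Finset.sum_le_sum fun k hk ↦ hf k hk x i y)

protected lemma integral {α : Type*} [MeasurableSpace α] {ν : Measure α} [IsProbabilityMeasure ν]
    {F : (∀ i, Ω i) → α → ℝ} (hF : ∀ a, HasBoundedDifferences (F · a) c)
    (hint : ∀ x, Integrable (F x) ν) :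
    HasBoundedDifferences (fun x ↦ ∫ a, F x a ∂ν) c := fun x i y ↦ by
  rw [← integral_sub (hint _) (hint _)]
  have hdiff : ∀ a, ‖F x a - F (update x i y) a‖ ≤ c i := fun a ↦ hF a x i y
  simpa using norm_integral_le_of_norm_le_const (μ := ν) (.of_forall hdiff)

lemma comp_update (hf : HasBoundedDifferences f c) (i : ι) (z : Ω i) :
    HasBoundedDifferences (fun x ↦ f (update x i z)) (update c i 0) := fun x j y ↦ by
  obtain rfl | hji := eq_or_ne j i
  · simp
  · simpa only [update_comm hji, update_of_ne hji] using hf (update x i z) j y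

lemma abs_update_sub_update_le (hf : HasBoundedDifferences f c) (x : ∀ i, Ω i) (i : ι)
    (y z : Ω i) : |f (update x i y) - f (update x i z)| ≤ c i := by
  simpa using hf (update x i y) i z

lemma lipschitz_comp {φ : ℝ → ℝ} {τ : ℝ} (hφ : ∀ u v, |φ u - φ v| ≤ τ * |u - v|)
    (hf : HasBoundedDifferences f c) :
    HasBoundedDifferences (fun x ↦ φ (f x)) (fun i ↦ τ * c i) := fun x i y ↦ by
  have hτ : 0 ≤ τ := by simpa using (abs_nonneg _).trans (hφ 1 0)
  exact (hφ _ _).trans (mul_le_mul_of_nonneg_left (hf x i y) hτ)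

lemma of_removal {fminus : (∀ i, Ω i) → ι → ℝ}
    (hfminus : ∀ x i y, fminus (update x i y) i = fminus x i)
    (hf : ∀ x i, |f x - fminus x i| ≤ c i) : HasBoundedDifferences f (fun i ↦ 2 * c i) :=
  fun x i y ↦ by
    have hupdate := hf (update x i y) i
    rw [hfminus, abs_sub_comm] at hupdate
    exact ((abs_sub_le _ _ _).trans (add_le_add (hf x i) hupdate)).trans_eq (two_mul _).symm

lemma abs_sub_le_sum [Fintype ι] (hf : HasBoundedDifferences f c) (x y : ∀ i, Ω i) :
    |f x - f y| ≤ ∑ i, c i := by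
  suffices ∀ s : Finset ι, |f x - f (s.piecewise y x)| ≤ ∑ i ∈ s, c i by
    simpa using this Finset.univ
  intro s
  induction s using Finset.induction_on with
  | empty => simp
  | insert i s hi ih =>
    rw [Finset.piecewise_insert, Finset.sum_insert hi, add_comm]
    exact (abs_sub_le _ _ _).trans (add_le_add ih (hf _ i (y i)))

end HasBoundedDifferences

end BoundedDifferences

section Oscillation

variable {α : Type*} {f : α → ℝ} {C : ℝ}

lemma exists_forall_mem_Icc_of_abs_sub_le (hf : ∀ x y, |f x - f y| ≤ C) :
    ∃ a, ∀ x, f x ∈ Set.Icc a (a + C) := by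
  cases isEmpty_or_nonempty α with
  | inl _ => exact ⟨0, isEmptyElim⟩
  | inr _ =>
    have hlower : ∀ x y, f x - C ≤ f y := fun x y ↦ by linarith [(abs_le.1 (hf x y)).2]
    have hbdd : BddBelow (Set.range f) :=
      ⟨f (Classical.arbitrary α) - C, Set.forall_mem_range.2 (hlower _)⟩
    exact ⟨⨅ x, f x, fun x ↦ ⟨ciInf_le hbdd x, sub_le_iff_le_add.1 (le_ciInf (hlower x))⟩⟩

variable [MeasurableSpace α] {μ : Measure α}

lemma integrable_of_abs_sub_le [IsFiniteMeasure μ] (hfm : AEMeasurable f μ)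
    (hf : ∀ x y, |f x - f y| ≤ C) : Integrable f μ :=
  have ⟨_, ha⟩ := exists_forall_mem_Icc_of_abs_sub_le hf
  .of_mem_Icc _ _ hfm (.of_forall ha)

lemma integrable_exp_mul_of_abs_sub_le [IsFiniteMeasure μ] (hfm : AEMeasurable f μ)
    (hf : ∀ x y, |f x - f y| ≤ C) (t : ℝ) : Integrable (fun x ↦ Real.exp (t * f x)) μ :=
  have ⟨_, ha⟩ := exists_forall_mem_Icc_of_abs_sub_le hf
  integrable_exp_mul_of_mem_Icc hfm (.of_forall ha)

lemma mgf_sub_const_le_exp_iff (a t u : ℝ) :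
    mgf (fun x ↦ f x - a) μ t ≤ Real.exp u ↔ mgf f μ t ≤ Real.exp (t * a + u) := by
  simp only [sub_eq_add_neg, mgf_add_const, mul_neg]
  rw [← le_div_iff₀ (Real.exp_pos _), ← Real.exp_sub, sub_neg_eq_add, add_comm]

lemma coe_sq_nnnorm_div_two (r : ℝ) : (((‖r‖₊ / 2) ^ 2 : NNReal) : ℝ) = r ^ 2 / 4 := by
  rw [NNReal.coe_pow, NNReal.coe_div, coe_nnnorm, Real.norm_eq_abs, NNReal.coe_ofNat, div_pow,
    sq_abs]
  norm_num

lemma mgf_le_of_abs_sub_le [IsProbabilityMeasure μ] (hfm : AEMeasurable f μ)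
    (hf : ∀ x y, |f x - f y| ≤ C) (t : ℝ) :
    mgf f μ t ≤ Real.exp (t * (∫ x, f x ∂μ) + C ^ 2 * t ^ 2 / 8) := by
  obtain ⟨a, ha⟩ := exists_forall_mem_Icc_of_abs_sub_le hf
  have hoeffding := (hasSubgaussianMGF_of_mem_Icc hfm (.of_forall ha)).mgf_le t
  rw [mgf_sub_const_le_exp_iff, coe_sq_nnnorm_div_two, add_sub_cancel_left] at hoeffding
  refine hoeffding.trans_eq ?_
  ring_nf

end Oscillation

section McDiarmid

variable {ι : Type*} [DecidableEq ι] {Ω : ι → Type*} [∀ i, MeasurableSpace (Ω i)]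
  (μ : ∀ i, Measure (Ω i)) [∀ i, IsProbabilityMeasure (μ i)] {f : (∀ i, Ω i) → ℝ} {c : ι → ℝ}

/-- The average of `f` over its `i`-th argument, kept as a function of all arguments so that the
type of the function does not change when coordinates are averaged out successively. -/
noncomputable def coordAverage (i : ι) (f : (∀ i, Ω i) → ℝ) (x : ∀ i, Ω i) : ℝ :=
  ∫ z, f (update x i z) ∂μ i

lemma measurable_coordAverage (i : ι) (hf : Measurable f) : Measurable (coordAverage μ i f) :=
  (hf.comp measurable_update').stronglyMeasurable.integral_prod_right'.measurable

protected lemma HasBoundedDifferences.coordAverage (hfm : Measurable f)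
    (hf : HasBoundedDifferences f c) (i : ι) :
    HasBoundedDifferences (coordAverage μ i f) (update c i 0) :=
  .integral (hf.comp_update i) fun x ↦
    integrable_of_abs_sub_le (hfm.comp (measurable_update x)).aemeasurable
      (hf.abs_update_sub_update_le x i)

variable [Fintype ι]

lemma measurePreserving_update (i : ι) :
    MeasurePreserving (fun p : (∀ j, Ω j) × Ω i ↦ update p.1 i p.2)
      ((Measure.pi μ).prod (μ i)) (Measure.pi μ) := by
  refine ⟨measurable_update', (Measure.pi_eq fun s hs ↦ ?_).symm⟩
  have hpreimage : (fun p : (∀ j, Ω j) × Ω i ↦ update p.1 i p.2) ⁻¹' Set.univ.pi s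
      = Set.univ.pi (update s i Set.univ) ×ˢ s i := by
    ext ⟨x, z⟩
    simp only [Set.mem_preimage, Set.mem_univ_pi, Set.mem_prod,
      forall_update_iff x (fun j t ↦ t ∈ s j), forall_update_iff s (fun j t ↦ x j ∈ t),
      Set.mem_univ, true_and, and_comm]
  rw [Measure.map_apply measurable_update' (.univ_pi hs), hpreimage, Measure.prod_prod,
    Measure.pi_pi, ← Finset.prod_erase_mul _ _ (Finset.mem_univ i),
    ← Finset.prod_erase_mul _ (fun j ↦ μ j (s j)) (Finset.mem_univ i), update_self, measure_univ,
    mul_one]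
  congr 1
  exact Finset.prod_congr rfl fun j hj ↦ by rw [update_of_ne (Finset.ne_of_mem_erase hj)]

variable {μ}

lemma integral_coordAverage (i : ι) (hf : Integrable f (Measure.pi μ)) :
    ∫ x, coordAverage μ i f x ∂Measure.pi μ = ∫ x, f x ∂Measure.pi μ := by
  have hmp := measurePreserving_update μ i
  have hintegral := integral_map hmp.aemeasurable (hmp.map_eq.symm ▸ hf.aestronglyMeasurable)
  rw [hmp.map_eq] at hintegral
  rw [hintegral]
  exact (integral_prod _ (hmp.integrable_comp_of_integrable hf)).symm

namespace HasBoundedDifferences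

lemma integrable (hfm : Measurable f) (hf : HasBoundedDifferences f c) :
    Integrable f (Measure.pi μ) :=
  integrable_of_abs_sub_le hfm.aemeasurable hf.abs_sub_le_sum

lemma integrable_exp_mul (hfm : Measurable f) (hf : HasBoundedDifferences f c) (t : ℝ) :
    Integrable (fun x ↦ Real.exp (t * f x)) (Measure.pi μ) :=
  integrable_exp_mul_of_abs_sub_le hfm.aemeasurable hf.abs_sub_le_sum t

lemma mgf_le_mul_mgf_coordAverage (hfm : Measurable f) (hf : HasBoundedDifferences f c) (i : ι)
    (t : ℝ) :
    mgf f (Measure.pi μ) t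
      ≤ Real.exp (c i ^ 2 * t ^ 2 / 8) * mgf (coordAverage μ i f) (Measure.pi μ) t := by
  have hslice (x : ∀ j, Ω j) : coordAverage μ i (fun y ↦ Real.exp (t * f y)) x
      ≤ Real.exp (c i ^ 2 * t ^ 2 / 8) * Real.exp (t * coordAverage μ i f x) := by
    rw [← Real.exp_add, add_comm]
    exact mgf_le_of_abs_sub_le (hfm.comp (measurable_update x)).aemeasurable
      (hf.abs_update_sub_update_le x i) t
  have hexp := hf.integrable_exp_mul (μ := μ) hfm t
  rw [mgf, mgf, ← integral_coordAverage i hexp, ← integral_const_mul]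
  refine integral_mono ?_ (.const_mul ?_ _) hslice
  · exact ((measurePreserving_update μ i).integrable_comp_of_integrable hexp).integral_prod_left
  · exact (hf.coordAverage μ hfm i).integrable_exp_mul (measurable_coordAverage μ i hfm) t

lemma mgf_le_of_eq_zero_of_notMem (s : Finset ι) (hfm : Measurable f)
    (hf : HasBoundedDifferences f c) (hc : ∀ i ∉ s, c i = 0) (t : ℝ) :
    mgf f (Measure.pi μ) t
      ≤ Real.exp (t * (∫ x, f x ∂Measure.pi μ) + (∑ i ∈ s, c i ^ 2) * t ^ 2 / 8) := by
  induction s using Finset.induction_on generalizing f c with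
  | empty =>
    have hsum : ∑ i, c i = 0 := Finset.sum_eq_zero fun i _ ↦ hc i (Finset.notMem_empty i)
    simpa [hsum] using mgf_le_of_abs_sub_le hfm.aemeasurable hf.abs_sub_le_sum t
  | insert i s hi ih =>
    have haverage := ih (measurable_coordAverage μ i hfm) (hf.coordAverage μ hfm i) fun j hj ↦ by
      obtain rfl | hji := eq_or_ne j i
      · exact update_self ..
      · rw [update_of_ne hji, hc j (by simp [hji, hj])]
    have hsum : ∑ j ∈ s, update c i 0 j ^ 2 = ∑ j ∈ s, c j ^ 2 :=
      Finset.sum_congr rfl fun j hj ↦ by rw [update_of_ne (ne_of_mem_of_not_mem hj hi)]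
    rw [integral_coordAverage i (hf.integrable hfm), hsum] at haverage
    refine (hf.mgf_le_mul_mgf_coordAverage hfm i t).trans
      ((mul_le_mul_of_nonneg_left haverage (Real.exp_nonneg _)).trans_eq ?_)
    rw [← Real.exp_add, Finset.sum_insert hi]
    ring_nf

lemma hasSubgaussianMGF_sub_integral (hfm : Measurable f) (hf : HasBoundedDifferences f c) :
    HasSubgaussianMGF (fun x ↦ f x - ∫ y, f y ∂Measure.pi μ) (∑ i, (‖c i‖₊ / 2) ^ 2)
      (Measure.pi μ) where
  integrable_exp_mul := integrable_exp_mul_of_abs_sub_le (hfm.sub_const _).aemeasurable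
    fun x y ↦ by simpa using hf.abs_sub_le_sum x y
  mgf_le t := by
    rw [mgf_sub_const_le_exp_iff]
    simp only [NNReal.coe_sum, coe_sq_nnnorm_div_two, ← Finset.sum_div]
    refine (hf.mgf_le_of_eq_zero_of_notMem Finset.univ hfm (by simp) t).trans_eq ?_
    ring_nf

end HasBoundedDifferences

lemma ofReal_one_sub_le_measure_le_of_hasSubgaussianMGF {α : Type*} [MeasurableSpace α]
    {ν : Measure α} [IsProbabilityMeasure ν] {X : α → ℝ} {σ : NNReal}
    (hX : HasSubgaussianMGF X σ ν) {δ : ℝ} (hδ₀ : 0 < δ) (hδ₁ : δ ≤ 1) :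
    ENNReal.ofReal (1 - δ) ≤ ν {x | X x ≤ √(2 * σ * Real.log δ⁻¹)} := by
  set ε := √(2 * σ * Real.log δ⁻¹)
  obtain rfl | hσ := eq_or_ne σ 0
  · have hone : 1 ≤ ν {x | X x ≤ ε} := by
      rw [← measure_univ (μ := ν)]
      refine measure_mono_ae ?_
      filter_upwards [hX.ae_eq_zero_of_hasSubgaussianMGF_zero] with x hx _
      exact hx.trans_le (Real.sqrt_nonneg _)
    exact (ENNReal.ofReal_le_one.2 (by linarith)).trans hone
  · have hlog : 0 ≤ Real.log δ⁻¹ := Real.log_nonneg (one_le_inv_iff₀.2 ⟨hδ₀, hδ₁⟩)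
    have htail : ν.real {x | ε ≤ X x} ≤ δ := by
      refine (hX.measure_ge_le (Real.sqrt_nonneg _)).trans_eq ?_
      rw [Real.sq_sqrt (by positivity), neg_div, mul_div_cancel_left₀ _ (by positivity),
        Real.log_inv, neg_neg, Real.exp_log hδ₀]
    have hcover : {x | X x ≤ ε} ∪ {x | ε ≤ X x} = Set.univ :=
      Set.eq_univ_of_forall fun x ↦ le_total (X x) ε
    have hunion := measureReal_union_le (μ := ν) {x | X x ≤ ε} {x | ε ≤ X x}
    rw [hcover, probReal_univ] at hunion
    rw [← ofReal_measureReal]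
    exact ENNReal.ofReal_le_ofReal (by linarith)

/-- **McDiarmid's inequality**. -/
theorem HasBoundedDifferences.ofReal_one_sub_le_measure_le (hfm : Measurable f)
    (hf : HasBoundedDifferences f c) {δ : ℝ} (hδ₀ : 0 < δ) (hδ₁ : δ ≤ 1) :
    ENNReal.ofReal (1 - δ) ≤ Measure.pi μ
      {x | f x ≤ (∫ y, f y ∂Measure.pi μ) + √((∑ i, c i ^ 2) * Real.log δ⁻¹ / 2)} := by
  have hparam : 2 * ((∑ i, (‖c i‖₊ / 2) ^ 2 : NNReal) : ℝ) = (∑ i, c i ^ 2) / 2 := by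
    simp only [NNReal.coe_sum, coe_sq_nnnorm_div_two, ← Finset.sum_div]
    ring
  have h := ofReal_one_sub_le_measure_le_of_hasSubgaussianMGF
    (hf.hasSubgaussianMGF_sub_integral (μ := μ) hfm) hδ₀ hδ₁
  simpa only [hparam, div_mul_eq_mul_div, sub_le_iff_le_add'] using h

end McDiarmid

section UniformStability

variable {ι Z : Type*} {L : (ι → Z) → Z → ℝ} {a b β : ℝ}

lemma hasBoundedDifferences_loss_self [DecidableEq ι]
    (hL : ∀ z, HasBoundedDifferences (L · z) fun _ ↦ β)
    (hrange : ∀ S z, L S z ∈ Set.Icc a b) (j : ι) :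
    HasBoundedDifferences (fun S ↦ L S (S j)) fun i ↦ if i = j then b - a else β := fun S i z ↦ by
  dsimp only
  split_ifs with hij
  · exact abs_sub_le_of_le_of_le (hrange _ _).1 (hrange _ _).2 (hrange _ _).1 (hrange _ _).2
  · simpa only [update_of_ne (Ne.symm hij)] using hL (S j) S i z

variable [Fintype ι] [MeasurableSpace Z] {D : Measure Z}

/-- The generalization gap of a learning algorithm trained on `S`: the expected loss minus the
average loss over `S`. Here `L S z` is the loss at `z` of the predictor trained on `S`. -/
noncomputable def generalizationGap (D : Measure Z) (L : (ι → Z) → Z → ℝ) (S : ι → Z) : ℝ :=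
  ∫ z, L S z ∂D - (Fintype.card ι : ℝ)⁻¹ * ∑ i, L S (S i)

variable [DecidableEq ι] [IsProbabilityMeasure D]

lemma hasBoundedDifferences_generalizationGap [Nonempty ι]
    (hL : ∀ z, HasBoundedDifferences (L · z) fun _ ↦ β)
    (hrange : ∀ S z, L S z ∈ Set.Icc a b) (hint : ∀ S, Integrable (L S) D) :
    HasBoundedDifferences (generalizationGap D L)
      fun _ ↦ ((2 * Fintype.card ι - 1) * β + (b - a)) / Fintype.card ι := by
  have hrisk := HasBoundedDifferences.integral hL hint
  have hempirical := (HasBoundedDifferences.sum Finset.univ fun j _ ↦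
    hasBoundedDifferences_loss_self hL hrange j).const_mul
      (inv_nonneg.2 (Fintype.card ι).cast_nonneg)
  have hwidth : (fun _ : ι ↦ ((2 * Fintype.card ι - 1) * β + (b - a)) / Fintype.card ι)
      = fun i : ι ↦ β + (Fintype.card ι : ℝ)⁻¹ * ∑ j, if i = j then b - a else β := by
    ext i
    have hsplit (j : ι) : (if i = j then b - a else β) = β + if i = j then b - a - β else 0 := by
      split_ifs <;> ring
    simp only [hsplit, Finset.sum_add_distrib, Finset.sum_const, Finset.sum_ite_eq,
      Finset.mem_univ, if_true, Finset.card_univ, nsmul_eq_mul]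
    field_simp
    ring
  rw [hwidth]
  exact hrisk.sub hempirical

lemma integral_prod_sub_integral_self_le (hL : ∀ z, HasBoundedDifferences (L · z) fun _ ↦ β)
    (hprod : Integrable (fun p : (ι → Z) × Z ↦ L p.1 p.2) ((Measure.pi fun _ ↦ D).prod D)) (i : ι)
    (hself : Integrable (fun S : ι → Z ↦ L S (S i)) (Measure.pi fun _ ↦ D)) :
    ∫ S, ∫ z, L S z ∂D ∂(Measure.pi fun _ ↦ D) - ∫ S, L S (S i) ∂(Measure.pi fun _ ↦ D) ≤ β := by
  have hresample : Integrable (fun p : (ι → Z) × Z ↦ L (update p.1 i p.2) p.2)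
      ((Measure.pi fun _ ↦ D).prod D) := by
    simpa [comp_def] using
      (measurePreserving_update (fun _ ↦ D) i).integrable_comp_of_integrable hself
  rw [← integral_coordAverage i hself]
  simp only [coordAverage, update_self]
  rw [← integral_prod _ hprod, ← integral_prod _ hresample, ← integral_sub hprod hresample]
  refine (integral_mono (hprod.sub hresample) (integrable_const β)
    fun p ↦ (le_abs_self _).trans (hL p.2 p.1 i p.2)).trans_eq ?_
  simp

lemma integral_generalizationGap_le [Nonempty ι]
    (hL : ∀ z, HasBoundedDifferences (L · z) fun _ ↦ β)
    (hprod : Integrable (fun p : (ι → Z) × Z ↦ L p.1 p.2) ((Measure.pi fun _ ↦ D).prod D))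
    (hself : ∀ i, Integrable (fun S : ι → Z ↦ L S (S i)) (Measure.pi fun _ ↦ D)) :
    ∫ S, generalizationGap D L S ∂(Measure.pi fun _ ↦ D) ≤ β := by
  simp only [generalizationGap]
  rw [integral_sub hprod.integral_prod_left
      ((integrable_finsetSum _ fun i _ ↦ hself i).const_mul _),
    integral_const_mul, integral_finsetSum _ fun i _ ↦ hself i]
  have hsum := Finset.sum_le_sum fun i (_ : i ∈ Finset.univ) ↦
    integral_prod_sub_integral_self_le hL hprod i (hself i)
  simp only [Finset.sum_sub_distrib, Finset.sum_const, Finset.card_univ, nsmul_eq_mul] at hsum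
  have hcard : (0 : ℝ) < Fintype.card ι := Nat.cast_pos.2 Fintype.card_pos
  rw [← mul_le_mul_iff_of_pos_left hcard, mul_sub, mul_inv_cancel_left₀ hcard.ne']
  exact hsum

/-- The **Bousquet–Elisseeff generalization bound** for uniformly stable learning algorithms. -/
theorem ofReal_one_sub_le_measure_generalizationGap_le [Nonempty ι]
    (hL : ∀ z, HasBoundedDifferences (L · z) fun _ ↦ β) (hrange : ∀ S z, L S z ∈ Set.Icc a b)
    (hint : ∀ S, Integrable (L S) D)
    (hprod : Integrable (fun p : (ι → Z) × Z ↦ L p.1 p.2) ((Measure.pi fun _ ↦ D).prod D))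
    (hself : ∀ i, Integrable (fun S : ι → Z ↦ L S (S i)) (Measure.pi fun _ ↦ D))
    (hmeas : Measurable (generalizationGap D L)) {δ : ℝ} (hδ₀ : 0 < δ) (hδ₁ : δ ≤ 1) :
    ENNReal.ofReal (1 - δ) ≤ (Measure.pi fun _ ↦ D)
      {S | generalizationGap D L S ≤ β + ((2 * Fintype.card ι - 1) * β + (b - a))
        * √(Real.log δ⁻¹ / (2 * Fintype.card ι))} := by
  have hgap := hasBoundedDifferences_generalizationGap hL hrange hint
  have hcard : (0 : ℝ) < Fintype.card ι := Nat.cast_pos.2 Fintype.card_pos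
  have hwidth : 0 ≤ (2 * Fintype.card ι - 1) * β + (b - a) := by
    have : Nonempty Z := nonempty_of_isProbabilityMeasure D
    simpa [hcard.ne'] using mul_nonneg (hgap.nonneg (Classical.arbitrary ι)) hcard.le
  refine (hgap.ofReal_one_sub_le_measure_le hmeas hδ₀ hδ₁).trans (measure_mono fun S hS ↦ ?_)
  refine hS.trans (add_le_add (integral_generalizationGap_le hL hprod hself) (le_of_eq ?_))
  rw [← Real.sqrt_sq hwidth, ← Real.sqrt_mul (sq_nonneg _), Real.sqrt_sq hwidth]
  congr 1
  rw [Finset.sum_const, Finset.card_univ, nsmul_eq_mul]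
  field_simp

end UniformStability

section StructuredClassification

variable {X : Type*} {n m : ℕ} {c : ℝ → ℝ → ℝ}

/-- The loss of a prediction function on a sample, averaged over the `n` positions; its expectation
is `genRisk`. -/
noncomputable def meanLoss (c : ℝ → ℝ → ℝ) (gS : X → Fin n → ℝ) (z : X × (Fin n → ℝ)) : ℝ :=
  1 / (n : ℝ) * sampleLoss c gS z

lemma genRisk_sub_empRisk_eq_generalizationGap [MeasurableSpace X]
    (D : Measure (X × (Fin n → ℝ))) (G : (Fin m → X × (Fin n → ℝ)) → X → Fin n → ℝ)
    (S : Fin m → X × (Fin n → ℝ)) :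
    genRisk D c (G S) - empRisk c (G S) S = generalizationGap D (fun S ↦ meanLoss c (G S)) S := by
  simp only [generalizationGap, meanLoss, genRisk, empRisk, ← Finset.mul_sum, Fintype.card_fin,
    one_div, mul_inv, mul_assoc]

lemma meanLoss_mem_Icc (hn : 0 < n) {gS : X → Fin n → ℝ} {z : X × (Fin n → ℝ)} {a b : ℝ}
    (hc : ∀ k, c (gS z.1 k) (z.2 k) ∈ Set.Icc a b) : meanLoss c gS z ∈ Set.Icc a b := by
  have hn' : (0 : ℝ) < n := Nat.cast_pos.2 hn
  have hlower := Finset.card_nsmul_le_sum Finset.univ _ a fun k _ ↦ (hc k).1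
  have hupper := Finset.sum_le_card_nsmul Finset.univ _ b fun k _ ↦ (hc k).2
  rw [Finset.card_fin, nsmul_eq_mul] at hlower hupper
  rw [meanLoss, one_div_mul_eq_div]
  exact ⟨(le_div_iff₀' hn').2 hlower, (div_le_iff₀' hn').2 hupper⟩

lemma hasBoundedDifferences_meanLoss (hn : 0 < n) {τ : ℝ}
    (hsmooth : ∀ y₁ y₂ ystar, |c y₁ ystar - c y₂ ystar| ≤ τ * |y₁ - y₂|)
    {ι : Type*} [DecidableEq ι] {Ω : ι → Type*} {G : (∀ i, Ω i) → X → Fin n → ℝ} {d : ι → ℝ}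
    {z : X × (Fin n → ℝ)} (hG : ∀ k, HasBoundedDifferences (fun S ↦ G S z.1 k) d) :
    HasBoundedDifferences (fun S ↦ meanLoss c (G S) z) (fun i ↦ τ * d i) := by
  have hsum := (HasBoundedDifferences.sum Finset.univ fun k _ ↦
    (hG k).lipschitz_comp fun y₁ y₂ ↦ hsmooth y₁ y₂ (z.2 k)).const_mul
      (one_div_nonneg.2 (Nat.cast_nonneg n))
  have hn' : (n : ℝ) ≠ 0 := Nat.cast_ne_zero.2 hn.ne'
  simpa [meanLoss, sampleLoss, hn'] using hsum

end StructuredClassification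

theorem generalization_vs_stability_general
    {X : Type*} [MeasurableSpace X] {n m : ℕ} (hn : 0 < n) (hm : 0 < m)
    (D : Measure (X × (Fin n → ℝ))) [IsProbabilityMeasure D]
    (G : (Fin m → X × (Fin n → ℝ)) → X → Fin n → ℝ)
    (Gminus : (Fin m → X × (Fin n → ℝ)) → Fin m → X → Fin n → ℝ)
    (c : ℝ → ℝ → ℝ) (τ Δ γ : ℝ)
    (hGminus : ∀ S i z, Gminus (update S i z) i = Gminus S i)
    (hstab : ∀ S i x k, |G S x k - Gminus S i x k| ≤ Δ)
    (hsmooth : ∀ y₁ y₂ ystar, |c y₁ ystar - c y₂ ystar| ≤ τ * |y₁ - y₂|)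
    (hbound : ∀ S (z : X × (Fin n → ℝ)) k, c (G S z.1 k) (z.2 k) ∈ Set.Icc 0 γ)
    (hint : ∀ S, Integrable (sampleLoss c (G S)) D)
    (hprod : Integrable (fun p : (Fin m → X × (Fin n → ℝ)) × (X × (Fin n → ℝ)) ↦
      sampleLoss c (G p.1) p.2) ((Measure.pi fun _ ↦ D).prod D))
    (hself : ∀ i, Integrable (fun S ↦ sampleLoss c (G S) (S i)) (Measure.pi fun _ ↦ D))
    (hmeas : Measurable fun S ↦ genRisk D c (G S) - empRisk c (G S) S)
    {δ : ℝ} (hδ : δ ∈ Set.Ioo (0 : ℝ) 1) :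
    ENNReal.ofReal (1 - δ) ≤ (Measure.pi fun _ ↦ D)
      {S | genRisk D c (G S) ≤ empRisk c (G S) S + 2 * τ * Δ
        + ((4 * (m : ℝ) - 2) * τ * Δ + γ) * √(Real.log δ⁻¹ / (2 * (m : ℝ)))} := by
  have : Nonempty (Fin m) := ⟨⟨0, hm⟩⟩
  have hstable (z) : HasBoundedDifferences (fun S ↦ meanLoss c (G S) z) fun _ ↦ τ * (2 * Δ) :=
    hasBoundedDifferences_meanLoss hn hsmooth fun k ↦ .of_removal
      (fun S i w ↦ congrArg (fun g ↦ g z.1 k) (hGminus S i w)) fun S i ↦ hstab S i z.1 k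
  simp only [genRisk_sub_empRisk_eq_generalizationGap] at hmeas
  refine (ofReal_one_sub_le_measure_generalizationGap_le hstable
    (fun S z ↦ meanLoss_mem_Icc hn (hbound S z)) (fun S ↦ (hint S).const_mul _)
    (hprod.const_mul _) (fun i ↦ (hself i).const_mul _) hmeas hδ.1 hδ.2.le).trans
      (measure_mono fun S (hS : generalizationGap D _ S ≤ _) ↦ ?_)
  rw [← genRisk_sub_empRisk_eq_generalizationGap, Fintype.card_fin] at hS
  change genRisk D c (G S) ≤ _
  linarith

/-- **Theorem 3 (Generalization vs. stability).**
Let `G` be a symmetric learning algorithm with point-wise loss `ℓτ` based on a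
`τ`-smooth cost, satisfying `0 ≤ ℓτ(G_S, z, k) ≤ γ`, and having function
stability `Δbar` with respect to removal of a sample.  Then for any
`δ ∈ (0,1)`, with probability at least `1 − δ` over the i.i.d. draw of the
training set `S` of size `m` from `D`,
`R(G_S) ≤ R_e(G_S) + 2τΔbar + ((4m−2)τΔbar + γ)√(ln(1/δ)/(2m))`. -/
theorem generalization_vs_stability
    {X : Type*} [MeasurableSpace X] {n m : ℕ} (hn : 0 < n) (hm : 0 < m)
    (D : Measure (X × (Fin n → ℝ))) [IsProbabilityMeasure D]
    (G : (Fin m → X × (Fin n → ℝ)) → X → Fin n → ℝ)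
    (Gminus : (Fin m → X × (Fin n → ℝ)) → Fin m → X → Fin n → ℝ)
    (cτ : ℝ → ℝ → ℝ) (τ Δbar : ℝ)
    (hGminus : ∀ (S : Fin m → X × (Fin n → ℝ)) (i : Fin m) (z : X × (Fin n → ℝ)),
      Gminus (Function.update S i z) i = Gminus S i)
    (hstab : ∀ (S : Fin m → X × (Fin n → ℝ)) (i : Fin m) (x : X) (k : Fin n),
      |G S x k - Gminus S i x k| ≤ Δbar)
    (hsmooth : ∀ y₁ y₂ ystar : ℝ, |cτ y₁ ystar - cτ y₂ ystar| ≤ τ * |y₁ - y₂|)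
    (hsym : ∀ (S : Fin m → X × (Fin n → ℝ)) (σ : Equiv.Perm (Fin m)), G (S ∘ σ) = G S)
    (γ : ℝ)
    (hbound : ∀ (S : Fin m → X × (Fin n → ℝ)) (z : X × (Fin n → ℝ)) (k : Fin n),
      0 ≤ cτ (G S z.1 k) (z.2 k) ∧ cτ (G S z.1 k) (z.2 k) ≤ γ)
    (hIntG : ∀ S : Fin m → X × (Fin n → ℝ),
      Integrable (fun z => sampleLoss cτ (G S) z) D)
    (hIntGm : ∀ (S : Fin m → X × (Fin n → ℝ)) (i : Fin m),
      Integrable (fun z => sampleLoss cτ (Gminus S i) z) D)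
    (hInt1 : Integrable
      (fun p : (Fin m → X × (Fin n → ℝ)) × (X × (Fin n → ℝ)) =>
        sampleLoss cτ (G p.1) p.2)
      ((Measure.pi fun _ : Fin m => D).prod D))
    (hInt2 : ∀ i : Fin m, Integrable
      (fun p : (Fin m → X × (Fin n → ℝ)) × (X × (Fin n → ℝ)) =>
        sampleLoss cτ (G (Function.update p.1 i p.2)) p.2)
      ((Measure.pi fun _ : Fin m => D).prod D))
    (hInt3 : ∀ j : Fin m, Integrable
      (fun S : Fin m → X × (Fin n → ℝ) => sampleLoss cτ (G S) (S j))
      (Measure.pi fun _ : Fin m => D))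
    (hIntR : Integrable
      (fun S : Fin m → X × (Fin n → ℝ) => genRisk D cτ (G S))
      (Measure.pi fun _ : Fin m => D))
    (hmeas : Measurable
      (fun S : Fin m → X × (Fin n → ℝ) => genRisk D cτ (G S) - empRisk cτ (G S) S))
 :
    ∀ δ : ℝ, δ ∈ Set.Ioo (0 : ℝ) 1 →
      ENNReal.ofReal (1 - δ) ≤
        (Measure.pi fun _ : Fin m => D)
          {S | genRisk D cτ (G S)
            ≤ empRisk cτ (G S) S + 2 * τ * Δbar
              + ((4 * (m : ℝ) - 2) * τ * Δbar + γ)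
                * Real.sqrt (Real.log δ⁻¹ / (2 * (m : ℝ)))} := by
  exact fun _ ↦ generalization_vs_stability_general hn hm D G Gminus cτ τ Δbar γ hGminus hstab
    hsmooth hbound hIntG hInt1 hInt3 hmeas
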